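/- Assume good X, good Y and good Z. If (ys ≠ zs or y ≠ z) and fresh ys y Z, then substitution of different variables distributes over itself: X[Y/y]_ys[Z/z]_zs = (X[Z/z]_zs)[(Y[Z/z]_zs)/y]_ys. -/

import Mathlib

open scoped Classical

universe u

section Binding

variable (var varsort index bindex opsym : Type u)

/-! ### Inputs -/

/-- An `(α,β)`-input: a partial function from `α` to `β`. -/
abbrev Input (α β : Type u) : Type u := α → Option β

/-- The domain of an input. -/
def idom {α β : Type u} (inp : Input α β) : Set α := {a | inp a ≠ none}

/-- The componentwise lifting of a predicate to inputs. -/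
def liftP {α β : Type u} (P : β → Prop) (inp : Input α β) : Prop :=
  ∀ a b, inp a = some b → P b

/-- The componentwise lifting of a function to inputs. -/
def liftF {α β γ : Type u} (f : β → γ) (inp : Input α β) : Input α γ :=
  fun a => (inp a).map f

/-- An input is small if its domain has cardinality smaller than that of `var`. -/
def smallDom {α β : Type u} (inp : Input α β) : Prop :=
  Cardinal.mk (idom inp) < Cardinal.mk var

/-! ### Quasiterms -/

mutual
/-- Quasiterms: raw terms before quotienting by alpha-equivalence. -/
inductive QTerm : Type u where
  | qVar : varsort → var → QTerm
  | qOp : opsym → (index → Option QTerm) → (bindex → Option QAbs) → QTerm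
/-- Quasiabstractions. -/
inductive QAbs : Type u where
  | qAbs : varsort → var → QTerm → QAbs
end

/-- Transposition of two variables. -/
noncomputable def swapVar (z1 z2 x : var) : var :=
  if x = z1 then z2 else if x = z2 then z1 else x

/-- Sort-aware transposition of variables (acts only on variables of varsort `zs`). -/
noncomputable def swapVarS (zs xs : varsort) (z1 z2 x : var) : var :=
  if xs = zs then swapVar var z1 z2 x else x

variable {var varsort index bindex opsym}

/-- Swapping of the variables `z1`, `z2` at varsort `zs` in a quasiterm
(transposing them everywhere, including binding positions). -/
noncomputable def qSwap (z1 z2 : var) (zs : varsort) :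
    QTerm var varsort index bindex opsym → QTerm var varsort index bindex opsym :=
  QTerm.rec (motive_1 := fun _ => QTerm var varsort index bindex opsym)
    (motive_2 := fun _ => QAbs var varsort index bindex opsym)
    (motive_3 := fun _ => Option (QTerm var varsort index bindex opsym))
    (motive_4 := fun _ => Option (QAbs var varsort index bindex opsym))
    (fun xs x => .qVar xs (swapVarS var varsort zs xs z1 z2 x))
    (fun d _ _ rinp rbinp => .qOp d rinp rbinp)
    (fun xs x _ rX => .qAbs xs (swapVarS var varsort zs xs z1 z2 x) rX)
    none (fun _ r => some r) none (fun _ r => some r)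

/-- Swapping of variables in a quasiabstraction. -/
noncomputable def qSwapAbs (z1 z2 : var) (zs : varsort) :
    QAbs var varsort index bindex opsym → QAbs var varsort index bindex opsym
  | .qAbs xs x X => .qAbs xs (swapVarS var varsort zs xs z1 z2 x) (qSwap z1 z2 zs X)

/-! ### Freshness and goodness -/

mutual
/-- `QFresh ys y X`: the variable `y` of varsort `ys` has no free occurrence in `X`. -/
inductive QFresh : varsort → var → QTerm var varsort index bindex opsym → Prop where
  | qVar : ∀ {ys y xs x}, (ys, y) ≠ (xs, x) → QFresh ys y (.qVar xs x)
  | qOp : ∀ {ys y d inp binp}, (∀ i X, inp i = some X → QFresh ys y X) →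
      (∀ j A, binp j = some A → QFreshAbs ys y A) → QFresh ys y (.qOp d inp binp)
/-- Freshness for quasiabstractions. -/
inductive QFreshAbs : varsort → var → QAbs var varsort index bindex opsym → Prop where
  | qAbs_bound : ∀ {xs x X}, QFreshAbs xs x (.qAbs xs x X)
  | qAbs_body : ∀ {ys y xs x X}, QFresh ys y X → QFreshAbs ys y (.qAbs xs x X)
end

mutual
/-- Good quasiterms: all constructors branch less than `|var|`. -/
inductive QGood : QTerm var varsort index bindex opsym → Prop where
  | qVar : ∀ {xs x}, QGood (.qVar xs x)
  | qOp : ∀ {d inp binp}, (∀ i X, inp i = some X → QGood X) →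
      (∀ j A, binp j = some A → QGoodAbs A) →
      smallDom var inp → smallDom var binp → QGood (.qOp d inp binp)
/-- Good quasiabstractions. -/
inductive QGoodAbs : QAbs var varsort index bindex opsym → Prop where
  | qAbs : ∀ {xs x X}, QGood X → QGoodAbs (.qAbs xs x X)
end

/-! ### Alpha-equivalence -/

mutual
/-- Alpha-equivalence of quasiterms. -/
inductive Alpha : QTerm var varsort index bindex opsym →
    QTerm var varsort index bindex opsym → Prop where
  | qVar : ∀ {xs x}, Alpha (.qVar xs x) (.qVar xs x)
  | qOp : ∀ {d inp binp inp' binp'},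
      (∀ i, inp i = none ↔ inp' i = none) →
      (∀ i X X', inp i = some X → inp' i = some X' → Alpha X X') →
      (∀ j, binp j = none ↔ binp' j = none) →
      (∀ j A A', binp j = some A → binp' j = some A' → AlphaAbs A A') →
      Alpha (.qOp d inp binp) (.qOp d inp' binp')
/-- Alpha-equivalence of quasiabstractions (the exists-fresh formulation). -/
inductive AlphaAbs : QAbs var varsort index bindex opsym →
    QAbs var varsort index bindex opsym → Prop where
  | qAbs : ∀ {xs x x' X X' y}, y ∉ ({x, x'} : Set var) →
      QFresh xs y X → QFresh xs y X' →
      Alpha (qSwap y x xs X) (qSwap y x' xs X') →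
      AlphaAbs (.qAbs xs x X) (.qAbs xs x' X')
end

/-! ### Terms and abstractions as quotients -/

variable (var varsort index bindex opsym)

/-- Terms: quasiterms modulo alpha-equivalence. -/
def Term : Type u := Quot (@Alpha var varsort index bindex opsym)

/-- Abstractions: quasiabstractions modulo alpha-equivalence. -/
def Abstr : Type u := Quot (@AlphaAbs var varsort index bindex opsym)

variable {var varsort index bindex opsym}

/-- The projection from quasiterms to terms. -/
def tmk : QTerm var varsort index bindex opsym → Term var varsort index bindex opsym :=
  Quot.mk _

/-- The projection from quasiabstractions to abstractions. -/
def amk : QAbs var varsort index bindex opsym → Abstr var varsort index bindex opsym :=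
  Quot.mk _

/-- A representative of a term. -/
noncomputable def trep (X : Term var varsort index bindex opsym) :
    QTerm var varsort index bindex opsym := Quot.out X

/-- A representative of an abstraction. -/
noncomputable def arep (A : Abstr var varsort index bindex opsym) :
    QAbs var varsort index bindex opsym := Quot.out A

/-- Good terms. -/
def good (X : Term var varsort index bindex opsym) : Prop := QGood (trep X)

/-- Good abstractions. -/
def goodAbs (A : Abstr var varsort index bindex opsym) : Prop := QGoodAbs (arep A)

/-- The variable-injection constructor on terms. -/
def Var (xs : varsort) (x : var) : Term var varsort index bindex opsym :=
  tmk (.qVar xs x)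

/-- The operation constructor on terms. -/
noncomputable def Op (d : opsym) (inp : Input index (Term var varsort index bindex opsym))
    (binp : Input bindex (Abstr var varsort index bindex opsym)) :
    Term var varsort index bindex opsym :=
  tmk (.qOp d (liftF trep inp) (liftF arep binp))

/-- The abstraction constructor. -/
noncomputable def Abs (xs : varsort) (x : var) (X : Term var varsort index bindex opsym) :
    Abstr var varsort index bindex opsym :=
  amk (.qAbs xs x (trep X))

/-- Freshness on terms. -/
def fresh (ys : varsort) (y : var) (X : Term var varsort index bindex opsym) : Prop :=
  QFresh ys y (trep X)

/-- Freshness on abstractions. -/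
def freshAbs (ys : varsort) (y : var) (A : Abstr var varsort index bindex opsym) : Prop :=
  QFreshAbs ys y (arep A)

/-- Swapping on terms. -/
noncomputable def tswap (X : Term var varsort index bindex opsym)
    (z1 z2 : var) (zs : varsort) : Term var varsort index bindex opsym :=
  tmk (qSwap z1 z2 zs (trep X))

/-! ### Substitution -/

mutual
/-- The graph of capture-avoiding substitution on quasiterms:
`QSubst X Y y ys Z` means that `Z` is a result of substituting `Y` for the free
occurrences of the variable `y` of varsort `ys` in `X` (along a capture-free
representative). -/
inductive QSubst : QTerm var varsort index bindex opsym →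
    QTerm var varsort index bindex opsym → var → varsort →
    QTerm var varsort index bindex opsym → Prop where
  | var_eq : ∀ {Y y ys}, QSubst (.qVar ys y) Y y ys Y
  | var_ne : ∀ {Y y ys xs x}, (xs, x) ≠ (ys, y) → QSubst (.qVar xs x) Y y ys (.qVar xs x)
  | op : ∀ {Y y ys d inp binp inp' binp'},
      (∀ i, inp i = none ↔ inp' i = none) →
      (∀ i X X', inp i = some X → inp' i = some X' → QSubst X Y y ys X') →
      (∀ j, binp j = none ↔ binp' j = none) →
      (∀ j A A', binp j = some A → binp' j = some A' → QSubstAbs A Y y ys A') →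
      QSubst (.qOp d inp binp) Y y ys (.qOp d inp' binp')
/-- The graph of capture-avoiding substitution on quasiabstractions. -/
inductive QSubstAbs : QAbs var varsort index bindex opsym →
    QTerm var varsort index bindex opsym → var → varsort →
    QAbs var varsort index bindex opsym → Prop where
  | abs : ∀ {Y y ys xs x X X'}, (xs, x) ≠ (ys, y) → QFresh xs x Y →
      QSubst X Y y ys X' → QSubstAbs (.qAbs xs x X) Y y ys (.qAbs xs x X')
end

/-- The graph of capture-avoiding substitution on terms. -/
def SubstRel (X Y : Term var varsort index bindex opsym) (y : var) (ys : varsort)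
    (Z : Term var varsort index bindex opsym) : Prop :=
  ∃ qX qZ, tmk qX = X ∧ tmk qZ = Z ∧ QSubst qX (trep Y) y ys qZ

/-- Capture-avoiding substitution on terms: `subst X Y y ys` is `X[Y/y]_ys`. -/
noncomputable def subst (X Y : Term var varsort index bindex opsym)
    (y : var) (ys : varsort) : Term var varsort index bindex opsym :=
  if h : ∃ Z, SubstRel X Y y ys Z then h.choose else X

/-- The graph of capture-avoiding substitution on abstractions. -/
def SubstAbsRel (A : Abstr var varsort index bindex opsym)
    (Y : Term var varsort index bindex opsym) (y : var) (ys : varsort)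
    (B : Abstr var varsort index bindex opsym) : Prop :=
  ∃ qA qB, amk qA = A ∧ amk qB = B ∧ QSubstAbs qA (trep Y) y ys qB

/-- Capture-avoiding substitution on abstractions: `substAbs A Y y ys` is `A[Y/y]_ys`. -/
noncomputable def substAbs (A : Abstr var varsort index bindex opsym)
    (Y : Term var varsort index bindex opsym) (y : var) (ys : varsort) :
    Abstr var varsort index bindex opsym :=
  if h : ∃ B, SubstAbsRel A Y y ys B then h.choose else A

/-! ### Parallel substitution -/

mutual
/-- The graph of capture-avoiding parallel substitution on quasiterms, along an
assignment `ρ : varsort → var → Option qterm`. -/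
inductive QPSubst : QTerm var varsort index bindex opsym →
    (varsort → var → Option (QTerm var varsort index bindex opsym)) →
    QTerm var varsort index bindex opsym → Prop where
  | var_some : ∀ {ρ xs x Y}, ρ xs x = some Y → QPSubst (.qVar xs x) ρ Y
  | var_none : ∀ {ρ xs x}, ρ xs x = none → QPSubst (.qVar xs x) ρ (.qVar xs x)
  | op : ∀ {ρ d inp binp inp' binp'},
      (∀ i, inp i = none ↔ inp' i = none) →
      (∀ i X X', inp i = some X → inp' i = some X' → QPSubst X ρ X') →
      (∀ j, binp j = none ↔ binp' j = none) →
      (∀ j A A', binp j = some A → binp' j = some A' → QPSubstAbs A ρ A') →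
      QPSubst (.qOp d inp binp) ρ (.qOp d inp' binp')
/-- The graph of capture-avoiding parallel substitution on quasiabstractions. -/
inductive QPSubstAbs : QAbs var varsort index bindex opsym →
    (varsort → var → Option (QTerm var varsort index bindex opsym)) →
    QAbs var varsort index bindex opsym → Prop where
  | abs : ∀ {ρ xs x X X'}, ρ xs x = none →
      (∀ ys y Y, ρ ys y = some Y → QFresh xs x Y) →
      QPSubst X ρ X' → QPSubstAbs (.qAbs xs x X) ρ (.qAbs xs x X')
end

/-- Turning a term-valued assignment into a quasiterm-valued one, by picking
representatives. -/
noncomputable def qassign (ρ : varsort → var → Option (Term var varsort index bindex opsym)) :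
    varsort → var → Option (QTerm var varsort index bindex opsym) :=
  fun xs x => (ρ xs x).map trep

/-- The graph of parallel substitution on terms. -/
def PSubstRel (X : Term var varsort index bindex opsym)
    (ρ : varsort → var → Option (Term var varsort index bindex opsym))
    (Z : Term var varsort index bindex opsym) : Prop :=
  ∃ qX qZ, tmk qX = X ∧ tmk qZ = Z ∧ QPSubst qX (qassign ρ) qZ

/-- Capture-avoiding parallel substitution on terms: `psubst X ρ` is `X[ρ]`. -/
noncomputable def psubst (X : Term var varsort index bindex opsym)
    (ρ : varsort → var → Option (Term var varsort index bindex opsym)) :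
    Term var varsort index bindex opsym :=
  if h : ∃ Z, PSubstRel X ρ Z then h.choose else X

/-- The graph of parallel substitution on abstractions. -/
def PSubstAbsRel (A : Abstr var varsort index bindex opsym)
    (ρ : varsort → var → Option (Term var varsort index bindex opsym))
    (B : Abstr var varsort index bindex opsym) : Prop :=
  ∃ qA qB, amk qA = A ∧ amk qB = B ∧ QPSubstAbs qA (qassign ρ) qB

/-- Capture-avoiding parallel substitution on abstractions. -/
noncomputable def psubstAbs (A : Abstr var varsort index bindex opsym)
    (ρ : varsort → var → Option (Term var varsort index bindex opsym)) :
    Abstr var varsort index bindex opsym :=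
  if h : ∃ B, PSubstAbsRel A ρ B then h.choose else A

/-!
Every quasiterm has a locally nameless image, a tree in which bound variables are de Bruijn indices
and free variables keep their names. Alpha-equivalent quasiterms have the same image; conversely,
good quasiterms with the same image are alpha-equivalent, because the regularity of `|var|` leaves
a fresh name at every binder. Hence a good term is determined by its image.

On images, capture-avoiding substitution is plain replacement of a free name by a tree: this
identifies whichever result the choice in `subst` picks, and fresh names again show that a good
term has a representative along which the substitution is capture-free. The distribution law is
then an induction on trees. A variable `y` becomes `Y[Z/z]` on both sides, and a variable `z`
becomes `Z` on both sides since `y` is fresh for `Z`.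
-/

theorem option_elim_congr {α γ : Type*} {c : γ} {f g : α → γ} {o : Option α}
    (h : ∀ a, o = some a → f a = g a) : o.elim c f = o.elim c g := by
  cases o with
  | none => rfl
  | some a => exact h a rfl

theorem option_elim_rel {α β γ δ : Type*} {R : γ → δ → Prop} {c : γ} {c' : δ} {f : α → γ}
    {g : β → δ} {o : Option α} {o' : Option β} (hc : R c c') (hnone : o = none ↔ o' = none)
    (hsome : ∀ a b, o = some a → o' = some b → R (f a) (g b)) : R (o.elim c f) (o'.elim c' g) := by
  cases o <;> cases o' <;> simp_all

theorem option_elim_eq_elim_iff {α β γ : Type*} {c : γ} {f : α → γ} {g : β → γ} {o : Option α}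
    {o' : Option β} (hf : ∀ a, f a ≠ c) (hg : ∀ b, g b ≠ c) :
    o.elim c f = o'.elim c g ↔
      (o = none ↔ o' = none) ∧ ∀ a b, o = some a → o' = some b → f a = g b := by
  cases o <;> cases o' <;> simp [hf, (hg _).symm]

theorem option_elim_iff {α γ : Type*} {P : γ → Prop} {c : γ} {f : α → γ} {o : Option α}
    (hc : P c) : P (o.elim c f) ↔ ∀ a, o = some a → P (f a) := by
  cases o <;> simp [hc]

theorem setOf_elim_ne_eq_idom {α β : Type u} {γ : Type*} {c : γ} {f : β → γ} (hf : ∀ b, f b ≠ c)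
    (inp : Input α β) : {a | (inp a).elim c f ≠ c} = idom inp := by
  ext a
  cases h : inp a <;> simp [idom, h, hf]

theorem exists_input_input_of_forall_exists {α β γ δ : Type u} {inp : Input α β}
    {P : β → γ → Prop} {R : γ → δ → Prop}
    (h : ∀ a b, inp a = some b → ∃ c d, P b c ∧ R c d) :
    ∃ (inp' : Input α γ) (inp'' : Input α δ), (∀ a, inp a = none ↔ inp' a = none) ∧
      (∀ a b c, inp a = some b → inp' a = some c → P b c) ∧
      (∀ a, inp' a = none ↔ inp'' a = none) ∧
      ∀ a c d, inp' a = some c → inp'' a = some d → R c d := by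
  have hpoint (a : α) : ∃ (o' : Option γ) (o'' : Option δ), (inp a = none ↔ o' = none) ∧
      (∀ b c, inp a = some b → o' = some c → P b c) ∧ (o' = none ↔ o'' = none) ∧
      ∀ c d, o' = some c → o'' = some d → R c d := by
    cases hb : inp a with
    | none => exact ⟨none, none, by simp⟩
    | some b =>
      obtain ⟨c, d, hP, hR⟩ := h a b hb
      exact ⟨some c, some d, by simp [hP, hR]⟩
  choose inp' inp'' hnone hP hnone' hR using hpoint
  exact ⟨inp', inp'', hnone, hP, hnone', hR⟩

theorem mk_setOf_exists_mem_lt {α β γ : Type u} {κ : Cardinal.{u}} (hκ : κ.IsRegular)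
    {inp : Input α β} (hinp : Cardinal.mk (idom inp) < κ) {F : β → Set γ}
    (hF : ∀ a b, inp a = some b → Cardinal.mk (F b) < κ) :
    Cardinal.mk {c | ∃ a b, inp a = some b ∧ c ∈ F b} < κ := by
  have hunion : {c | ∃ a b, inp a = some b ∧ c ∈ F b} =
      ⋃ a ∈ idom inp, (inp a).elim ∅ F := by
    ext c
    simp only [Set.mem_iUnion, Set.mem_ofPred_eq]
    refine exists_congr fun a => ?_
    cases h : inp a <;> simp [idom, h]
  rw [hunion, Cardinal.card_biUnion_lt_iff_forall_of_isRegular hκ hinp]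
  rintro a -
  exact (option_elim_iff (P := fun s : Set γ => Cardinal.mk s < κ)
    ((Cardinal.mk_eq_zero _).trans_lt hκ.pos)).2 (hF a)

theorem swapVarS_eq_swap (zs xs : varsort) (z1 z2 x : var) :
    (xs, swapVarS var varsort zs xs z1 z2 x) = Equiv.swap (zs, z1) (zs, z2) (xs, x) := by
  simp only [swapVarS, swapVar, Equiv.swap_apply_def, Prod.mk.injEq]
  split_ifs <;> grind

theorem qSwap_qOp (z1 z2 : var) (zs : varsort) (d : opsym)
    (inp : Input index (QTerm var varsort index bindex opsym))
    (binp : Input bindex (QAbs var varsort index bindex opsym)) :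
    qSwap z1 z2 zs (.qOp d inp binp) =
      .qOp d (liftF (qSwap z1 z2 zs) inp) (liftF (qSwapAbs z1 z2 zs) binp) := by
  change QTerm.qOp d _ _ = _
  congr 1
  · funext i
    simp only [liftF]
    cases inp i <;> rfl
  · funext j
    simp only [liftF]
    rcases binp j with _ | ⟨xs, x, X⟩ <;> rfl

theorem QTerm.induct {P : QTerm var varsort index bindex opsym → Prop}
    {Q : QAbs var varsort index bindex opsym → Prop}
    (qVar : ∀ xs x, P (.qVar xs x))
    (qOp : ∀ d inp binp, (∀ i X, inp i = some X → P X) → (∀ j A, binp j = some A → Q A) →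
      P (.qOp d inp binp))
    (qAbs : ∀ xs x X, P X → Q (.qAbs xs x X)) (X : QTerm var varsort index bindex opsym) : P X :=
  QTerm.rec (motive_1 := P) (motive_2 := Q) (motive_3 := fun o => ∀ X, o = some X → P X)
    (motive_4 := fun o => ∀ A, o = some A → Q A) qVar qOp qAbs
    nofun (fun _ hX _ h => Option.some.inj h ▸ hX) nofun (fun _ hA _ h => Option.some.inj h ▸ hA) X

/-! ### Free variables -/

/-- The free variables of a quasiterm, each paired with its varsort. -/
def QTerm.freeVars (X : QTerm var varsort index bindex opsym) : Set (varsort × var) :=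
  {v | ¬ QFresh v.1 v.2 X}

/-- The free variables of a quasiabstraction, each paired with its varsort. -/
def QAbs.freeVars (A : QAbs var varsort index bindex opsym) : Set (varsort × var) :=
  {v | ¬ QFreshAbs v.1 v.2 A}

theorem QTerm.notMem_freeVars {X : QTerm var varsort index bindex opsym} {xs : varsort} {x : var} :
    (xs, x) ∉ X.freeVars ↔ QFresh xs x X :=
  not_not

theorem QTerm.freeVars_qVar (xs : varsort) (x : var) :
    (.qVar xs x : QTerm var varsort index bindex opsym).freeVars = {(xs, x)} := by
  ext ⟨ys, y⟩
  refine not_iff_comm.1 ⟨fun h => .qVar h, ?_⟩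
  rintro ⟨h⟩
  exact h

theorem QTerm.freeVars_qOp (d : opsym) (inp : Input index (QTerm var varsort index bindex opsym))
    (binp : Input bindex (QAbs var varsort index bindex opsym)) :
    (QTerm.qOp d inp binp).freeVars = {v | ∃ i X, inp i = some X ∧ v ∈ X.freeVars} ∪
      {v | ∃ j A, binp j = some A ∧ v ∈ A.freeVars} := by
  ext ⟨ys, y⟩
  refine not_iff_comm.1 ⟨fun h => ?_, ?_⟩
  · simp only [Set.mem_union, Set.mem_ofPred_eq, not_or, not_exists, not_and] at h
    exact .qOp (fun i X hX => not_not.1 (h.1 i X hX)) fun j A hA => not_not.1 (h.2 j A hA)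
  · rintro (_ | ⟨hinp, hbinp⟩) (⟨i, X, hX, hmem⟩ | ⟨j, A, hA, hmem⟩)
    · exact hmem (hinp i X hX)
    · exact hmem (hbinp j A hA)

theorem QAbs.freeVars_qAbs (xs : varsort) (x : var) (X : QTerm var varsort index bindex opsym) :
    (QAbs.qAbs xs x X).freeVars = X.freeVars \ {(xs, x)} := by
  ext ⟨ys, y⟩
  refine not_iff_comm.1 ⟨fun h => ?_, ?_⟩
  · by_cases hv : (ys, y) = (xs, x)
    · cases hv
      exact .qAbs_bound
    · exact .qAbs_body (not_not.1 fun hmem => h ⟨hmem, hv⟩)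
  · rintro (_ | hfresh) ⟨hmem, hv⟩
    · exact hv rfl
    · exact hmem hfresh

theorem QGood.mk_freeVars_lt (hreg : (Cardinal.mk var).IsRegular)
    {X : QTerm var varsort index bindex opsym} (hX : QGood X) :
    Cardinal.mk X.freeVars < Cardinal.mk var := by
  induction hX using QGood.rec
    (motive_2 := fun A _ => Cardinal.mk A.freeVars < Cardinal.mk var) with
  | qVar =>
    rw [QTerm.freeVars_qVar, Cardinal.mk_singleton]
    exact Cardinal.one_lt_aleph0.trans_le hreg.aleph0_le
  | qOp _ _ hinp hbinp ihinp ihbinp =>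
    rw [QTerm.freeVars_qOp]
    exact (Cardinal.mk_union_le _ _).trans_lt <| Cardinal.add_lt_of_lt hreg.aleph0_le
      (mk_setOf_exists_mem_lt hreg hinp ihinp) (mk_setOf_exists_mem_lt hreg hbinp ihbinp)
  | qAbs _ ih =>
    rw [QAbs.freeVars_qAbs]
    exact (Cardinal.mk_le_mk_of_subset Set.sdiff_subset).trans_lt ih

theorem exists_notMem_of_finite_of_qFresh (hreg : (Cardinal.mk var).IsRegular) (xs : varsort)
    {s : Set var} (hs : s.Finite) {X Y : QTerm var varsort index bindex opsym} (hX : QGood X)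
    (hY : QGood Y) : ∃ v ∉ s, QFresh xs v X ∧ QFresh xs v Y := by
  let avoid : Set var := s ∪ (Prod.mk xs ⁻¹' X.freeVars ∪ Prod.mk xs ⁻¹' Y.freeVars)
  have fiber_lt {Z : QTerm var varsort index bindex opsym} (hZ : QGood Z) :
      Cardinal.mk (Prod.mk xs ⁻¹' Z.freeVars) < Cardinal.mk var :=
    (Cardinal.mk_preimage_of_injective _ _ (Prod.mk_right_injective xs)).trans_lt
      (hZ.mk_freeVars_lt hreg)
  have union_lt {s t : Set var} (hs : Cardinal.mk s < Cardinal.mk var)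
      (ht : Cardinal.mk t < Cardinal.mk var) :
      Cardinal.mk (s ∪ t : Set var) < Cardinal.mk var :=
    (Cardinal.mk_union_le s t).trans_lt (Cardinal.add_lt_of_lt hreg.aleph0_le hs ht)
  have avoid_lt : Cardinal.mk avoid < Cardinal.mk var :=
    union_lt (hs.lt_aleph0.trans_le hreg.aleph0_le) (union_lt (fiber_lt hX) (fiber_lt hY))
  obtain ⟨v, hv⟩ : ∃ v, v ∉ avoid := by
    by_contra! hall
    rw [Set.eq_univ_of_forall hall, Cardinal.mk_univ] at avoid_lt
    exact avoid_lt.false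
  simp only [avoid, Set.mem_union, Set.mem_preimage, not_or, QTerm.notMem_freeVars] at hv
  exact ⟨v, hv⟩

/-! ### Locally nameless images -/

/-- A locally nameless variable: a de Bruijn index for a bound variable, or a free variable paired
with its varsort. -/
abbrev LNVar (var varsort : Type u) : Type u := ℕ ⊕ (varsort × var)

/-- Locally nameless trees. Terms and abstractions share one type, and `undef` stands for an
argument outside the domain of an input, so that the type is not nested. -/
inductive LNTree (var varsort index bindex opsym : Type u) : Type u where
  | undef : LNTree var varsort index bindex opsym
  | var : LNVar var varsort → LNTree var varsort index bindex opsym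
  | abs : varsort → LNTree var varsort index bindex opsym → LNTree var varsort index bindex opsym
  | op : opsym → (index → LNTree var varsort index bindex opsym) →
      (bindex → LNTree var varsort index bindex opsym) → LNTree var varsort index bindex opsym

/-- Environments, which give the locally nameless reading of each variable. The environment
`Sum.inr` reads every variable as free. -/
abbrev LNEnv (var varsort : Type u) : Type u := varsort × var → LNVar var varsort

/-- The environment under a binder of `v`: indices are shifted, and `v` becomes index `0`. -/
noncomputable def LNEnv.push (ρ : LNEnv var varsort) (v : varsort × var) : LNEnv var varsort :=
  Function.update (Sum.map Nat.succ id ∘ ρ) v (.inl 0)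

theorem LNEnv.push_comp_equiv (ρ : LNEnv var varsort) (e : Equiv.Perm (varsort × var))
    (v : varsort × var) : ρ.push (e v) ∘ e = LNEnv.push (ρ ∘ e) v := by
  simp only [LNEnv.push, Function.update_comp_equiv, Equiv.symm_apply_apply, Function.comp_assoc]

theorem LNEnv.push_eq_inr_iff {ρ : LNEnv var varsort} {v w u : varsort × var} :
    ρ.push v w = .inr u ↔ w ≠ v ∧ ρ w = .inr u := by
  by_cases h : w = v
  · simp [LNEnv.push, h]
  · cases hw : ρ w <;> simp [LNEnv.push, h, hw]

theorem LNEnv.push_injective {ρ : LNEnv var varsort} (hρ : Function.Injective ρ)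
    (v : varsort × var) : Function.Injective (ρ.push v) := by
  have hshift : Function.Injective (Sum.map Nat.succ id : LNVar var varsort → _) :=
    Nat.succ_injective.sumMap Function.injective_id
  have hzero (s : LNVar var varsort) : Sum.map Nat.succ id s ≠ .inl 0 := by
    cases s <;> simp
  intro u w h
  by_cases hu : u = v <;> by_cases hw : w = v <;>
    simp only [LNEnv.push, hu, hw, Function.update_self, Function.update_of_ne, ne_eq,
      not_false_eq_true, Function.comp_apply, (hzero _).symm, hzero] at h ⊢
  exact hρ (hshift h)

theorem LNEnv.eqOn_push {ρ σ : LNEnv var varsort} {s : Set (varsort × var)} {v : varsort × var}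
    (h : Set.EqOn ρ σ (s \ {v})) : Set.EqOn (ρ.push v) (σ.push v) s := by
  intro w hw
  by_cases hwv : w = v
  · simp [LNEnv.push, hwv]
  · simp [LNEnv.push, hwv, h ⟨hw, hwv⟩]

mutual
/-- The locally nameless image of a quasiterm in an environment. -/
noncomputable def QTerm.toTree : QTerm var varsort index bindex opsym → LNEnv var varsort →
    LNTree var varsort index bindex opsym
  | .qVar xs x, ρ => .var (ρ (xs, x))
  | .qOp d inp binp, ρ =>
    .op d (fun i => QTerm.optToTree (inp i) ρ) (fun j => QAbs.optToTree (binp j) ρ)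
termination_by structural X => X
/-- The locally nameless image of a quasiabstraction in an environment. -/
noncomputable def QAbs.toTree : QAbs var varsort index bindex opsym → LNEnv var varsort →
    LNTree var varsort index bindex opsym
  | .qAbs xs x X, ρ => .abs xs (X.toTree (ρ.push (xs, x)))
termination_by structural A => A
/-- The image of an optional quasiterm, `none` being sent to `undef`; it is only needed for the
structural recursion. -/
noncomputable def QTerm.optToTree : Option (QTerm var varsort index bindex opsym) →
    LNEnv var varsort → LNTree var varsort index bindex opsym
  | none, _ => .undef
  | some X, ρ => X.toTree ρ
termination_by structural o => o
/-- The image of an optional quasiabstraction, `none` being sent to `undef`; it is only needed for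
the structural recursion. -/
noncomputable def QAbs.optToTree : Option (QAbs var varsort index bindex opsym) →
    LNEnv var varsort → LNTree var varsort index bindex opsym
  | none, _ => .undef
  | some A, ρ => A.toTree ρ
termination_by structural o => o
end

theorem QTerm.toTree_qVar (xs : varsort) (x : var) (ρ : LNEnv var varsort) :
    (.qVar xs x : QTerm var varsort index bindex opsym).toTree ρ = .var (ρ (xs, x)) :=
  rfl

theorem QTerm.toTree_qOp (d : opsym) (inp : Input index (QTerm var varsort index bindex opsym))
    (binp : Input bindex (QAbs var varsort index bindex opsym)) (ρ : LNEnv var varsort) :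
    (QTerm.qOp d inp binp).toTree ρ =
      .op d (fun i => (inp i).elim .undef (·.toTree ρ)) fun j =>
        (binp j).elim .undef (·.toTree ρ) := by
  rw [QTerm.toTree]
  congr 1
  · funext i
    cases inp i <;> rfl
  · funext j
    cases binp j <;> rfl

theorem QAbs.toTree_qAbs (xs : varsort) (x : var) (X : QTerm var varsort index bindex opsym)
    (ρ : LNEnv var varsort) :
    (QAbs.qAbs xs x X).toTree ρ = .abs xs (X.toTree (ρ.push (xs, x))) :=
  rfl

theorem QTerm.toTree_ne_undef (ρ : LNEnv var varsort) (X : QTerm var varsort index bindex opsym) :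
    X.toTree ρ ≠ .undef := by
  cases X <;> exact nofun

theorem QAbs.toTree_ne_undef (ρ : LNEnv var varsort) (A : QAbs var varsort index bindex opsym) :
    A.toTree ρ ≠ .undef := by
  cases A
  exact nofun

theorem QTerm.toTree_congr {X : QTerm var varsort index bindex opsym} {ρ σ : LNEnv var varsort}
    (h : Set.EqOn ρ σ X.freeVars) : X.toTree ρ = X.toTree σ := by
  induction X using QTerm.induct
    (Q := fun A => ∀ {ρ σ}, Set.EqOn ρ σ A.freeVars → A.toTree ρ = A.toTree σ)
    generalizing ρ σ with
  | qVar xs x =>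
    rw [freeVars_qVar, Set.eqOn_singleton] at h
    rw [toTree_qVar, toTree_qVar, h]
  | qOp d inp binp ihinp ihbinp =>
    rw [freeVars_qOp, Set.eqOn_union] at h
    simp only [toTree_qOp, LNTree.op.injEq, true_and]
    exact ⟨funext fun i => option_elim_congr fun X hX =>
        ihinp i X hX fun v hv => h.1 ⟨i, X, hX, hv⟩,
      funext fun j => option_elim_congr fun A hA =>
        ihbinp j A hA fun v hv => h.2 ⟨j, A, hA, hv⟩⟩
  | qAbs xs x X ih =>
    next ρ σ h =>
    rw [QAbs.freeVars_qAbs] at h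
    rw [QAbs.toTree_qAbs, QAbs.toTree_qAbs, ih (LNEnv.eqOn_push h)]

theorem QTerm.toTree_qSwap (z1 z2 : var) (zs : varsort) (X : QTerm var varsort index bindex opsym)
    (ρ : LNEnv var varsort) :
    (qSwap z1 z2 zs X).toTree ρ = X.toTree (ρ ∘ Equiv.swap (zs, z1) (zs, z2)) := by
  induction X using QTerm.induct
    (Q := fun A => ∀ ρ, (qSwapAbs z1 z2 zs A).toTree ρ =
      A.toTree (ρ ∘ Equiv.swap (zs, z1) (zs, z2)))
    generalizing ρ with
  | qVar xs x => exact congrArg (fun v => LNTree.var (ρ v)) (swapVarS_eq_swap zs xs z1 z2 x)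
  | qOp d inp binp ihinp ihbinp =>
    simp only [qSwap_qOp, toTree_qOp, liftF, Option.elim_map, LNTree.op.injEq, true_and]
    exact ⟨funext fun i => option_elim_congr fun X hX => ihinp i X hX ρ,
      funext fun j => option_elim_congr fun A hA => ihbinp j A hA ρ⟩
  | qAbs xs x X ih =>
    rw [qSwapAbs, QAbs.toTree_qAbs, QAbs.toTree_qAbs, ih, swapVarS_eq_swap, LNEnv.push_comp_equiv]

theorem QTerm.toTree_qSwap_push {X : QTerm var varsort index bindex opsym} {xs : varsort}
    {y : var} (hy : QFresh xs y X) (x : var) (ρ : LNEnv var varsort) :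
    (qSwap y x xs X).toTree (ρ.push (xs, y)) = X.toTree (ρ.push (xs, x)) := by
  have hpush : ρ.push (xs, y) ∘ Equiv.swap (xs, y) (xs, x) =
      LNEnv.push (ρ ∘ Equiv.swap (xs, y) (xs, x)) (xs, x) := by
    rw [← LNEnv.push_comp_equiv, Equiv.swap_apply_right]
  rw [toTree_qSwap, hpush]
  refine toTree_congr (LNEnv.eqOn_push ?_)
  rintro v ⟨hv, hvx⟩
  have hvy : v ≠ (xs, y) := fun h => notMem_freeVars.2 hy (h ▸ hv)
  rw [Function.comp_apply, Equiv.swap_apply_of_ne_of_ne hvy hvx]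

theorem Alpha.toTree_eq {X X' : QTerm var varsort index bindex opsym} (h : Alpha X X')
    (ρ : LNEnv var varsort) : X.toTree ρ = X'.toTree ρ := by
  induction h using Alpha.rec (motive_2 := fun A A' _ => ∀ ρ, A.toTree ρ = A'.toTree ρ)
    generalizing ρ with
  | qVar => rfl
  | qOp hinp _ hbinp _ ihinp ihbinp =>
    simp only [QTerm.toTree_qOp, LNTree.op.injEq, true_and]
    exact ⟨funext fun i => option_elim_rel rfl (hinp i) fun X X' hX hX' => ihinp i X X' hX hX' ρ,
      funext fun j => option_elim_rel rfl (hbinp j) fun A A' hA hA' => ihbinp j A A' hA hA' ρ⟩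
  | qAbs _ hX hX' _ ih =>
    rw [QAbs.toTree_qAbs, QAbs.toTree_qAbs, ← QTerm.toTree_qSwap_push hX,
      ← QTerm.toTree_qSwap_push hX', ih]

/-! ### Goodness of trees -/

/-- Good trees, the counterpart of good quasiterms: every operation has fewer than `|var|` defined
arguments. -/
def LNTree.Good : LNTree var varsort index bindex opsym → Prop
  | .undef => True
  | .var _ => True
  | .abs _ t => t.Good
  | .op _ f g => (∀ i, (f i).Good) ∧ (∀ j, (g j).Good) ∧
      Cardinal.mk {i | f i ≠ .undef} < Cardinal.mk var ∧
      Cardinal.mk {j | g j ≠ .undef} < Cardinal.mk var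

theorem QTerm.good_toTree_iff {X : QTerm var varsort index bindex opsym} {ρ : LNEnv var varsort} :
    (X.toTree ρ).Good ↔ QGood X := by
  induction X using QTerm.induct (Q := fun A => ∀ {ρ}, (A.toTree ρ).Good ↔ QGoodAbs A)
    generalizing ρ with
  | qVar xs x => exact ⟨fun _ => .qVar, fun _ => trivial⟩
  | qOp d inp binp ihinp ihbinp =>
    have hinp (i) : ((inp i).elim .undef (·.toTree ρ)).Good ↔ ∀ X, inp i = some X → QGood X :=
      (option_elim_iff trivial).trans (forall₂_congr fun X hX => ihinp i X hX)
    have hbinp (j) : ((binp j).elim .undef (·.toTree ρ)).Good ↔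
        ∀ A, binp j = some A → QGoodAbs A :=
      (option_elim_iff trivial).trans (forall₂_congr fun A hA => ihbinp j A hA)
    simp only [toTree_qOp, LNTree.Good, hinp, hbinp, setOf_elim_ne_eq_idom (toTree_ne_undef ρ),
      setOf_elim_ne_eq_idom (QAbs.toTree_ne_undef ρ)]
    refine ⟨fun ⟨h, h', hdom, hdom'⟩ => .qOp h h' hdom hdom', ?_⟩
    rintro (_ | ⟨h, h', hdom, hdom'⟩)
    exact ⟨h, h', hdom, hdom'⟩
  | qAbs xs x X ih =>
    rw [QAbs.toTree_qAbs, LNTree.Good, ih]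
    refine ⟨.qAbs, ?_⟩
    rintro ⟨h⟩
    exact h

theorem QGood.qSwap {X : QTerm var varsort index bindex opsym} (hX : QGood X) (z1 z2 : var)
    (zs : varsort) : QGood (qSwap z1 z2 zs X) := by
  rwa [← QTerm.good_toTree_iff (ρ := Sum.inr), QTerm.toTree_qSwap, QTerm.good_toTree_iff]

-- Renaming changes a quasiterm but not the shape of its image, so the induction runs on images.
theorem QTerm.induct_qSwap {P : QTerm var varsort index bindex opsym → Prop}
    {Q : QAbs var varsort index bindex opsym → Prop}
    (qVar : ∀ xs x, P (.qVar xs x))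
    (qOp : ∀ d inp binp, (∀ i X, inp i = some X → P X) → (∀ j A, binp j = some A → Q A) →
      P (.qOp d inp binp))
    (qAbs : ∀ xs x X, (∀ y, P (qSwap y x xs X)) → Q (.qAbs xs x X))
    (X : QTerm var varsort index bindex opsym) : P X := by
  suffices h : ∀ t : LNTree var varsort index bindex opsym,
      (∀ X ρ, X.toTree ρ = t → P X) ∧ (∀ A ρ, A.toTree ρ = t → Q A) from
    (h (X.toTree .inr)).1 X _ rfl
  intro t
  induction t with
  | undef =>
    exact ⟨fun X ρ h => absurd h (X.toTree_ne_undef ρ),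
      fun A ρ h => absurd h (A.toTree_ne_undef ρ)⟩
  | var s =>
    refine ⟨?_, by rintro ⟨xs, x, X⟩ ρ ⟨⟩⟩
    rintro (⟨xs, x⟩ | _) ρ ⟨⟩
    exact qVar xs x
  | abs xs t ih =>
    refine ⟨by rintro (_ | _) ρ ⟨⟩, ?_⟩
    rintro ⟨xs, x, X⟩ ρ ⟨⟩
    refine qAbs xs x X fun y => ih.1 _ (ρ.push (xs, x) ∘ Equiv.swap (xs, y) (xs, x)) ?_
    rw [toTree_qSwap, Function.comp_assoc, ← Equiv.coe_trans, Equiv.swap_swap]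
    rfl
  | op d f g ihf ihg =>
    refine ⟨?_, by rintro ⟨xs, x, X⟩ ρ ⟨⟩⟩
    rintro (_ | ⟨d, inp, binp⟩) ρ h
    · cases h
    · rw [toTree_qOp] at h
      cases h
      exact qOp d inp binp (fun i X hX => (ihf i).1 X ρ (by simp only [hX, Option.elim_some]))
        fun j A hA => (ihg j).2 A ρ (by simp only [hA, Option.elim_some])

theorem QTerm.alpha_of_toTree_eq (hreg : (Cardinal.mk var).IsRegular)
    {X X' : QTerm var varsort index bindex opsym} (hX : QGood X) (hX' : QGood X')
    {ρ : LNEnv var varsort} (hρ : Function.Injective ρ) (h : X.toTree ρ = X'.toTree ρ) :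
    Alpha X X' := by
  induction X using QTerm.induct_qSwap
    (Q := fun A => ∀ A' ρ, QGoodAbs A → QGoodAbs A' → Function.Injective ρ →
      A.toTree ρ = A'.toTree ρ → AlphaAbs A A')
    generalizing X' ρ with
  | qVar xs x =>
    rcases X' with ⟨xs', x'⟩ | _
    · cases hρ (LNTree.var.inj h)
      exact .qVar
    · cases h
  | qOp d inp binp ihinp ihbinp =>
    rcases X' with _ | ⟨d', inp', binp'⟩
    · cases h
    simp only [toTree_qOp, LNTree.op.injEq, funext_iff,
      option_elim_eq_elim_iff (toTree_ne_undef ρ) (toTree_ne_undef ρ),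
      option_elim_eq_elim_iff (QAbs.toTree_ne_undef ρ) (QAbs.toTree_ne_undef ρ)] at h
    obtain ⟨rfl, htree, htree'⟩ := h
    obtain _ | ⟨hinp, hbinp, -, -⟩ := hX
    obtain _ | ⟨hinp', hbinp', -, -⟩ := hX'
    exact .qOp (fun i => (htree i).1)
      (fun i X X' hX hX' => ihinp i X hX (hinp i X hX) (hinp' i X' hX') hρ
        ((htree i).2 X X' hX hX'))
      (fun j => (htree' j).1)
      fun j A A' hA hA' => ihbinp j A hA A' ρ (hbinp j A hA) (hbinp' j A' hA') hρ
        ((htree' j).2 A A' hA hA')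
  | qAbs xs x X ih =>
    next A' ρ hX hX' hρ h =>
    obtain ⟨xs', x', X'⟩ := A'
    obtain ⟨hX⟩ := hX
    obtain ⟨hX'⟩ := hX'
    obtain ⟨rfl, h⟩ := LNTree.abs.inj h
    obtain ⟨y, hy, hyX, hyX'⟩ :=
      exists_notMem_of_finite_of_qFresh hreg xs (Set.toFinite {x, x'}) hX hX'
    refine .qAbs hy hyX hyX' <| ih y (hX.qSwap y x xs) (hX'.qSwap y x' xs)
      (LNEnv.push_injective hρ (xs, y)) ?_
    rw [toTree_qSwap_push hyX, toTree_qSwap_push hyX', h]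

/-! ### Substitution -/

/-- Substitution of the tree `E` for the free variable `v`. Nothing is shifted: `E` is meant to be
an image in the environment `Sum.inr`, where all indices are bound inside `E`. -/
noncomputable def LNTree.subst (t E : LNTree var varsort index bindex opsym)
    (v : varsort × var) : LNTree var varsort index bindex opsym :=
  match t with
  | .undef => .undef
  | .var s => if s = .inr v then E else .var s
  | .abs xs t => .abs xs (t.subst E v)
  | .op d f g => .op d (fun i => (f i).subst E v) fun j => (g j).subst E v

theorem LNTree.subst_subst_of_ne {E F : LNTree var varsort index bindex opsym}
    {v w : varsort × var} (hvw : v ≠ w) (hF : F.subst (E.subst F w) v = F)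
    (t : LNTree var varsort index bindex opsym) :
    (t.subst E v).subst F w = (t.subst F w).subst (E.subst F w) v := by
  induction t with
  | undef => rfl
  | var s =>
    by_cases hv : s = .inr v
    · simp [subst, hv, hvw]
    · by_cases hw : s = .inr w <;> simp [subst, hv, hw, hF, hvw.symm]
  | abs xs t ih => simp only [subst, ih]
  | op d f g ihf ihg => simp only [subst, ihf, ihg]

theorem LNTree.Good.subst {E t : LNTree var varsort index bindex opsym} (ht : t.Good)
    (hE : E.Good) (v : varsort × var) : (t.subst E v).Good := by
  induction t with
  | undef => trivial
  | var s =>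
    rw [LNTree.subst]
    split_ifs
    exacts [hE, ht]
  | abs xs t ih => exact ih ht
  | op d f g ihf ihg =>
    obtain ⟨hf, hg, hdomf, hdomg⟩ := ht
    have ne_undef {t : LNTree var varsort index bindex opsym} (h : t.subst E v ≠ .undef) :
        t ≠ .undef := by
      rintro rfl
      exact h rfl
    exact ⟨fun i => ihf i (hf i), fun j => ihg j (hg j),
      (Cardinal.mk_le_mk_of_subset fun _ => ne_undef).trans_lt hdomf,
      (Cardinal.mk_le_mk_of_subset fun _ => ne_undef).trans_lt hdomg⟩

theorem QTerm.subst_toTree_of_forall_ne {X : QTerm var varsort index bindex opsym}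
    {ρ : LNEnv var varsort} {v : varsort × var} (h : ∀ w ∈ X.freeVars, ρ w ≠ .inr v)
    (E : LNTree var varsort index bindex opsym) : (X.toTree ρ).subst E v = X.toTree ρ := by
  induction X using QTerm.induct
    (Q := fun A => ∀ {ρ : LNEnv var varsort}, (∀ w ∈ A.freeVars, ρ w ≠ .inr v) →
      (A.toTree ρ).subst E v = A.toTree ρ)
    generalizing ρ with
  | qVar xs x => exact if_neg (h _ (by rw [freeVars_qVar]; rfl))
  | qOp d inp binp ihinp ihbinp =>
    simp only [freeVars_qOp, Set.mem_union] at h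
    simp only [toTree_qOp, LNTree.subst, LNTree.op.injEq, true_and]
    exact ⟨funext fun i => (option_elim_iff (P := fun t => LNTree.subst t E v = t) rfl).2
        fun X hX => ihinp i X hX fun w hw => h w (.inl ⟨i, X, hX, hw⟩),
      funext fun j => (option_elim_iff (P := fun t => LNTree.subst t E v = t) rfl).2
        fun A hA => ihbinp j A hA fun w hw => h w (.inr ⟨j, A, hA, hw⟩)⟩
  | qAbs xs x X ih =>
    next ρ h =>
    rw [QAbs.toTree_qAbs, LNTree.subst, ih]
    intro w hw hpush
    obtain ⟨hwx, hρw⟩ := LNEnv.push_eq_inr_iff.1 hpush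
    exact h w (by rw [QAbs.freeVars_qAbs]; exact ⟨hw, hwx⟩) hρw

theorem QSubst.toTree_eq {X Y X' : QTerm var varsort index bindex opsym} {y : var} {ys : varsort}
    (h : QSubst X Y y ys X') {ρ : LNEnv var varsort} (hy : ∀ v, ρ v = .inr (ys, y) ↔ v = (ys, y))
    (hY : Set.EqOn ρ .inr Y.freeVars) :
    X'.toTree ρ = (X.toTree ρ).subst (Y.toTree .inr) (ys, y) := by
  induction h using QSubst.rec
    (motive_2 := fun A Y y ys A' _ => ∀ {ρ : LNEnv var varsort},
      (∀ v, ρ v = .inr (ys, y) ↔ v = (ys, y)) → Set.EqOn ρ .inr Y.freeVars →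
      A'.toTree ρ = (A.toTree ρ).subst (Y.toTree .inr) (ys, y))
    generalizing ρ with
  | var_eq =>
    rw [QTerm.toTree_congr hY]
    exact (if_pos ((hy _).2 rfl)).symm
  | var_ne hne => exact (if_neg (mt (hy _).1 hne)).symm
  | op hinp _ hbinp _ ihinp ihbinp =>
    simp only [QTerm.toTree_qOp, LNTree.subst, LNTree.op.injEq, true_and]
    constructor <;> funext k
    · exact option_elim_rel (R := fun t t' => t' = LNTree.subst t _ _) rfl (hinp k)
        fun X X' hX hX' => ihinp k X X' hX hX' hy hY
    · exact option_elim_rel (R := fun t t' => t' = LNTree.subst t _ _) rfl (hbinp k)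
        fun A A' hA hA' => ihbinp k A A' hA hA' hy hY
  | abs hne hfresh _ ih =>
    next ρ hy hY =>
    rw [QAbs.toTree_qAbs, QAbs.toTree_qAbs, LNTree.subst, ih]
    · intro v
      rw [LNEnv.push_eq_inr_iff, hy]
      exact ⟨And.right, fun hv => ⟨hv ▸ hne.symm, hv⟩⟩
    · intro v hv
      refine LNEnv.push_eq_inr_iff.2 ⟨?_, hY hv⟩
      rintro rfl
      exact QTerm.notMem_freeVars.2 hfresh hv

theorem QTerm.exists_qSubst_of_qGood (hreg : (Cardinal.mk var).IsRegular)
    {X Y : QTerm var varsort index bindex opsym} (hX : QGood X) (hY : QGood Y) (y : var)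
    (ys : varsort) :
    ∃ X' X'', X.toTree = X'.toTree ∧ QSubst X' Y y ys X'' := by
  induction X using QTerm.induct_qSwap
    (Q := fun A => QGoodAbs A → ∃ A' A'', A.toTree = A'.toTree ∧ QSubstAbs A' Y y ys A'') with
  | qVar xs x =>
    by_cases hx : (xs, x) = (ys, y)
    · cases hx
      exact ⟨_, _, rfl, .var_eq⟩
    · exact ⟨_, _, rfl, .var_ne hx⟩
  | qOp d inp binp ihinp ihbinp =>
    obtain _ | ⟨hinp, hbinp, -, -⟩ := hX
    obtain ⟨inp', inp'', hnone, htree, hnone', hsubst⟩ :=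
      exists_input_input_of_forall_exists fun i X hX => ihinp i X hX (hinp i X hX)
    obtain ⟨binp', binp'', hbnone, hbtree, hbnone', hbsubst⟩ :=
      exists_input_input_of_forall_exists fun j A hA => ihbinp j A hA (hbinp j A hA)
    refine ⟨.qOp d inp' binp', .qOp d inp'' binp'', funext fun ρ => ?_,
      .op hnone' hsubst hbnone' hbsubst⟩
    simp only [toTree_qOp, LNTree.op.injEq, true_and]
    exact ⟨funext fun i => option_elim_rel rfl (hnone i) fun X X' hX hX' =>
        congrFun (htree i X X' hX hX') ρ,
      funext fun j => option_elim_rel rfl (hbnone j) fun A A' hA hA' =>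
        congrFun (hbtree j A A' hA hA') ρ⟩
  | qAbs xs x X ih =>
    next hX =>
    obtain ⟨hX⟩ := hX
    obtain ⟨v, hvy, hvX, hvY⟩ :=
      exists_notMem_of_finite_of_qFresh hreg xs (Set.finite_singleton y) hX hY
    obtain ⟨X', X'', htree, hsubst⟩ := ih v (hX.qSwap v x xs)
    refine ⟨.qAbs xs v X', .qAbs xs v X'', funext fun ρ => ?_, .abs ?_ hvY hsubst⟩
    · rw [QAbs.toTree_qAbs, QAbs.toTree_qAbs, ← htree, toTree_qSwap_push hvX]
    · exact fun h => hvy (congrArg Prod.snd h)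

/-! ### Terms -/

/-- The locally nameless image of a term. -/
noncomputable def Term.toTree (X : Term var varsort index bindex opsym) :
    LNTree var varsort index bindex opsym :=
  Quot.lift (QTerm.toTree · .inr) (fun _ _ h => h.toTree_eq .inr) X

theorem tmk_trep (X : Term var varsort index bindex opsym) : tmk (trep X) = X :=
  Quot.out_eq X

theorem Term.toTree_tmk (X : QTerm var varsort index bindex opsym) :
    (tmk X).toTree = X.toTree .inr :=
  rfl

theorem Term.toTree_trep (X : Term var varsort index bindex opsym) :
    (trep X).toTree .inr = X.toTree := by
  rw [← toTree_tmk, tmk_trep]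

theorem Term.good_toTree_iff {X : Term var varsort index bindex opsym} :
    X.toTree.Good ↔ good X := by
  rw [← toTree_trep, QTerm.good_toTree_iff, good]

theorem Term.toTree_injective_of_good (hreg : (Cardinal.mk var).IsRegular)
    {X Y : Term var varsort index bindex opsym} (hX : good X) (h : X.toTree = Y.toTree) :
    X = Y := by
  have hY : good Y := by rwa [← good_toTree_iff, ← h, good_toTree_iff]
  rw [← toTree_trep, ← toTree_trep] at h
  rw [← tmk_trep X, ← tmk_trep Y]
  exact Quot.sound (QTerm.alpha_of_toTree_eq hreg hX hY Sum.inr_injective h)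

theorem Term.toTree_subst (hreg : (Cardinal.mk var).IsRegular)
    {X Y : Term var varsort index bindex opsym} (hX : good X) (hY : good Y) (y : var)
    (ys : varsort) : (subst X Y y ys).toTree = X.toTree.subst Y.toTree (ys, y) := by
  have hex : ∃ Z, SubstRel X Y y ys Z := by
    obtain ⟨X', X'', htree, hsubst⟩ := QTerm.exists_qSubst_of_qGood hreg hX hY y ys
    have hX' : X = tmk X' :=
      toTree_injective_of_good hreg hX (by rw [toTree_tmk, ← htree, toTree_trep])
    exact ⟨tmk X'', X', X'', hX'.symm, rfl, hsubst⟩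
  rw [_root_.subst, dif_pos hex]
  obtain ⟨qX, qZ, hqX, hqZ, hsubst⟩ := hex.choose_spec
  rw [← hqZ, ← hqX, toTree_tmk, toTree_tmk, ← toTree_trep Y]
  exact hsubst.toTree_eq (fun _ => Sum.inr_injective.eq_iff) (Set.eqOn_refl _ _)

theorem good.subst (hreg : (Cardinal.mk var).IsRegular)
    {X Y : Term var varsort index bindex opsym} (hX : good X) (hY : good Y) (y : var)
    (ys : varsort) : good (subst X Y y ys) := by
  rw [← Term.good_toTree_iff, Term.toTree_subst hreg hX hY]
  exact (Term.good_toTree_iff.2 hX).subst (Term.good_toTree_iff.2 hY) _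

theorem Term.subst_toTree_of_fresh {Z : Term var varsort index bindex opsym} {ys : varsort}
    {y : var} (h : fresh ys y Z) (E : LNTree var varsort index bindex opsym) :
    Z.toTree.subst E (ys, y) = Z.toTree := by
  rw [← toTree_trep]
  refine QTerm.subst_toTree_of_forall_ne (fun v hv hvy => ?_) E
  cases hvy
  exact hv h

/-- substitution of different variables distributes over itself,
assuming freshness. -/
theorem subst_subst_different (hinf : Cardinal.aleph0 ≤ Cardinal.mk var)
    (hreg : (Cardinal.mk var).IsRegular)
    (X Y Z : Term var varsort index bindex opsym) (hX : good X) (hY : good Y) (hZ : good Z)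
    (y z : var) (ys zs : varsort)
    (hne : ys ≠ zs ∨ y ≠ z) (hfr : fresh ys y Z) :
    subst (subst X Y y ys) Z z zs =
      subst (subst X Z z zs) (subst Y Z z zs) y ys := by
  have hXY : good (subst X Y y ys) := hX.subst hreg hY y ys
  have hXZ : good (subst X Z z zs) := hX.subst hreg hZ z zs
  have hYZ : good (subst Y Z z zs) := hY.subst hreg hZ z zs
  have hyz : (ys, y) ≠ (zs, z) := by rwa [ne_eq, Prod.mk.injEq, not_and_or]
  apply Term.toTree_injective_of_good hreg (hXY.subst hreg hZ z zs)
  rw [Term.toTree_subst hreg hXY hZ, Term.toTree_subst hreg hX hY, Term.toTree_subst hreg hXZ hYZ,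
    Term.toTree_subst hreg hX hZ, Term.toTree_subst hreg hY hZ]
  exact LNTree.subst_subst_of_ne hyz (Term.subst_toTree_of_fresh hfr _) _

end Binding
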